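/- arXiv:2106.05333 — 2 statements merged into one kernel-verified Lean document; each statement's English description precedes it below -/
import Mathlib

section
/- For every integer α ≥ 2, the graph G(α, 0, 1) is not dimension-critical. -/
/-- `G` has a unit-distance representation in `ℝ^n`: an injective map of the vertices to
points of Euclidean `n`-space with adjacent vertices at Euclidean distance exactly `1`. -/
def SimpleGraph.HasUnitDistRep {V : Type*} (G : SimpleGraph V) (n : ℕ) : Prop :=
  ∃ f : V → EuclideanSpace ℝ (Fin n),
    Function.Injective f ∧ ∀ ⦃u v⦄, G.Adj u v → Dist.dist (f u) (f v) = 1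

/-- The dimension of `G`: the least `n` such that `G` has a unit-distance representation
in `ℝ^n`. -/
noncomputable def SimpleGraph.udim {V : Type*} (G : SimpleGraph V) : ℕ :=
  sInf {n | G.HasUnitDistRep n}

/-- `G` is dimension-critical: deleting any edge strictly lowers the dimension. -/
def SimpleGraph.IsDimCritical {V : Type*} (G : SimpleGraph V) : Prop :=
  ∀ e ∈ G.edgeSet, (G.deleteEdges {e}).udim < G.udim


/-- Part sizes for the complete multipartite graph `G(α, β, γ)`:
`α` parts of size 1, `β` parts of size 2, `γ` parts of size 3. -/
def Gsize (α β γ : ℕ) : Fin α ⊕ Fin β ⊕ Fin γ → ℕ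
  | Sum.inl _ => 1
  | Sum.inr (Sum.inl _) => 2
  | Sum.inr (Sum.inr _) => 3

/-- The complete multipartite graph `G(α, β, γ)` with `α` parts of size 1, `β` parts of
size 2, and `γ` parts of size 3; vertices are adjacent iff they lie in different parts. -/
def Gmp (α β γ : ℕ) :
    SimpleGraph (Σ i : Fin α ⊕ Fin β ⊕ Fin γ, Fin (Gsize α β γ i)) :=
  SimpleGraph.completeMultipartiteGraph fun i => Fin (Gsize α β γ i)

/-!
Deleting an edge `uv` of the clique `K_α` inside `G = G(α, 0, 1)` keeps the dimension at `α + 1`.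

Upper bound: given an orthonormal basis `b₀, …, b_α`, put the clique at `b₁, …, b_α`. The points at
distance `√2` from the whole clique include `±b₀`, and they form a set that is symmetric about the
centroid of the clique, which gives room for three of them.

Lower bound: consider a representation `v₁, …, v_α, p₁, p₂, p₃` of `G - uv`. If `∑ wᵢ = 0` and
`∑ wᵢ vᵢ = 0`, then `∑ wᵢ |vᵢ - x|²` does not depend on `x`. Comparing `x = p₁` with `x = vⱼ` gives
`wⱼ = 0` for every `vⱼ ≠ u, v`, and a relation between the two distinct points `u` and `v` is
trivial. Hence the `vᵢ` are affinely independent. So are the three `pₖ`, which lie on a sphere.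
Since every `pₖ` is equidistant from the `vᵢ`, the two affine spans have orthogonal directions, of
dimensions `α - 1` and `2`, so the ambient dimension is at least `α + 1`.
-/

open scoped InnerProductSpace

section Equidistance

variable {V P : Type*} [NormedAddCommGroup V] [InnerProductSpace ℝ V] [MetricSpace P]
  [NormedAddTorsor V P] {ι κ : Type*} {v : ι → P}

theorem sum_mul_dist_sq_eq_of_weightedVSub_eq_zero {s : Finset ι} {w : ι → ℝ}
    (hw : ∑ i ∈ s, w i = 0) (hv : s.weightedVSub v w = (0 : V)) (p q : P) :
    ∑ i ∈ s, w i * dist (v i) p ^ 2 = ∑ i ∈ s, w i * dist (v i) q ^ 2 := by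
  have h := EuclideanGeometry.inner_weightedVSub v hw (s₂ := Finset.univ) (w₂ := ![1, -1])
    ![p, q] (by simp)
  rw [hv, inner_zero_left] at h
  simp only [Fin.sum_univ_two, Matrix.cons_val_zero, Matrix.cons_val_one, Finset.sum_add_distrib,
    mul_neg, neg_mul, Finset.sum_neg_distrib, mul_assoc, one_mul, ← sq] at h
  linarith

theorem weight_eq_zero_of_weightedVSub_eq_zero_of_dist_eq {s : Finset ι} {w : ι → ℝ}
    (hw : ∑ i ∈ s, w i = 0) (hv : s.weightedVSub v w = (0 : V)) {a : P} {r : ℝ} (hr : r ≠ 0)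
    (ha : ∀ i, dist (v i) a = r) {j : ι} (hjs : j ∈ s) (hj : ∀ i ≠ j, dist (v i) (v j) = r) :
    w j = 0 := by
  classical
  have hsum_a : ∑ i ∈ s, w i * dist (v i) a ^ 2 = 0 := by
    simp only [ha, ← Finset.sum_mul, hw, zero_mul]
  have hsum_j : ∑ i ∈ s, w i * dist (v i) (v j) ^ 2 = -(w j * r ^ 2) := by
    have hrest : ∑ i ∈ s.erase j, w i * dist (v i) (v j) ^ 2 = ∑ i ∈ s.erase j, w i * r ^ 2 :=
      Finset.sum_congr rfl fun i hi => by rw [hj i (Finset.ne_of_mem_erase hi)]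
    rw [← Finset.add_sum_erase s _ hjs, hrest, ← Finset.sum_mul]
    rw [← Finset.add_sum_erase s w hjs] at hw
    rw [dist_self]
    linear_combination r ^ 2 * hw
  have hwj := sum_mul_dist_sq_eq_of_weightedVSub_eq_zero hw hv a (v j)
  rw [hsum_a, hsum_j, zero_eq_neg] at hwj
  exact (mul_eq_zero.mp hwj).resolve_right (pow_ne_zero 2 hr)

theorem affineIndependent_of_comp_of_dist_eq {e : κ → ι} (he : AffineIndependent ℝ (v ∘ e)) {a : P}
    {r : ℝ} (hr : r ≠ 0) (ha : ∀ i, dist (v i) a = r)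
    (hv : ∀ j ∉ Set.range e, ∀ i ≠ j, dist (v i) (v j) = r) : AffineIndependent ℝ v := by
  classical
  have hrange : AffineIndependent ℝ fun i : Set.range e => v i :=
    (affineIndependent_equiv (Equiv.ofInjective e he.injective.of_comp)).mp he
  intro s w hw hsv
  have hzero : ∀ i ∈ s, i ∉ Set.range e → w i = 0 := fun i hi hie =>
    weight_eq_zero_of_weightedVSub_eq_zero_of_dist_eq hw hsv hr ha hi (hv i hie)
  have hmem : ∀ i ∈ s, w i ≠ 0 → i ∈ Set.range e := fun i hi => not_imp_comm.mp (hzero i hi)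
  intro i hi
  by_cases hie : i ∈ Set.range e
  · refine hrange (s.subtype (· ∈ Set.range e)) (fun i => w i) ?_ ?_ ⟨i, hie⟩ (by simpa using hi)
    · rw [Finset.sum_subtype_eq_sum_filter, Finset.sum_filter_of_ne hmem, hw]
    · rw [Finset.weightedVSub_subtype_eq_filter, Finset.weightedVSub_filter_of_ne _ _ _ hmem, hsv]
  · exact hzero i hi hie

theorem affineIndependent_of_dist_eq_of_ne {i₀ i₁ : ι} (hne : v i₀ ≠ v i₁) {a : P} {r : ℝ}
    (hr : r ≠ 0) (ha : ∀ i, dist (v i) a = r)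
    (hv : ∀ j, j ≠ i₀ → j ≠ i₁ → ∀ i ≠ j, dist (v i) (v j) = r) : AffineIndependent ℝ v := by
  refine affineIndependent_of_comp_of_dist_eq (e := ![i₀, i₁]) ?_ hr ha fun j hj => ?_
  · have hcomp : v ∘ ![i₀, i₁] = ![v i₀, v i₁] := by
      funext k
      fin_cases k <;> rfl
    exact hcomp ▸ affineIndependent_of_ne ℝ hne
  · simp only [Matrix.range_cons, Matrix.range_empty, Set.union_empty, Set.mem_union,
      Set.mem_singleton_iff, not_or] at hj
    exact hv j hj.1 hj.2

theorem vectorSpan_range_isOrtho_of_dist_eq {p : κ → P} {r : κ → ℝ}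
    (h : ∀ i k, dist (v i) (p k) = r k) :
    vectorSpan ℝ (Set.range v) ⟂ vectorSpan ℝ (Set.range p) := by
  rw [vectorSpan_def, vectorSpan_def, Submodule.isOrtho_span]
  rintro _ ⟨_, ⟨i, rfl⟩, _, ⟨j, rfl⟩, rfl⟩ _ ⟨_, ⟨k, rfl⟩, _, ⟨l, rfl⟩, rfl⟩
  rw [real_inner_comm]
  exact EuclideanGeometry.inner_vsub_vsub_of_dist_eq_of_dist_eq
    ((h j l).trans (h i l).symm) ((h j k).trans (h i k).symm)

theorem card_add_card_le_finrank_add_two_of_dist_eq [FiniteDimensional ℝ V] [Fintype ι] [Fintype κ]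
    {p : κ → P} (hv : AffineIndependent ℝ v) (hp : AffineIndependent ℝ p) {r : κ → ℝ}
    (h : ∀ i k, dist (v i) (p k) = r k) :
    Fintype.card ι + Fintype.card κ ≤ Module.finrank ℝ V + 2 := by
  have hdisj := Submodule.finrank_add_finrank_le_of_disjoint
    (vectorSpan_range_isOrtho_of_dist_eq h).disjoint
  have hι := hv.card_le_finrank_succ
  have hκ := hp.card_le_finrank_succ
  omega

end Equidistance

section Apex

variable {V : Type*} [NormedAddCommGroup V] [InnerProductSpace ℝ V]

/-- Three points at the same distance from every `x` with `⟪x, e⟫ = 0` and `⟪x, m⟫ = ‖m‖ ^ 2`,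
provided that `⟪e, m⟫ = 0`. The last one is the reflection of `-e` in the point `m`. -/
def apex (e m : V) : Fin 3 → V :=
  ![e, -e, e + (2 : ℝ) • m]

theorem dist_apex {x e m : V} (hxe : ⟪x, e⟫_ℝ = 0) (hem : ⟪e, m⟫_ℝ = 0)
    (hxm : ⟪x, m⟫_ℝ = ‖m‖ ^ 2) (k : Fin 3) : dist x (apex e m k) = dist x e := by
  have hneg : ‖x - -e‖ = ‖x - e‖ := by
    rw [sub_neg_eq_add, norm_sub_eq_norm_add (by rwa [real_inner_comm])]
  have hrefl : ‖x - (e + (2 : ℝ) • m)‖ = ‖x - e‖ := by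
    rw [← sub_sub, ← sq_eq_sq₀ (norm_nonneg _) (norm_nonneg _), norm_sub_sq_real,
      real_inner_smul_right, inner_sub_left, hxm, hem, norm_smul, Real.norm_two]
    ring
  simp only [dist_eq_norm]
  fin_cases k
  exacts [rfl, hneg, hrefl]

theorem apex_injective {e m : V} (he : e ≠ 0) (hm : m ≠ 0) (hem : ⟪e, m⟫_ℝ = 0) :
    Function.Injective (apex e m) := by
  have h₀₁ : e ≠ -e := by
    rw [Ne, eq_neg_iff_add_eq_zero, ← two_smul ℝ]
    exact smul_ne_zero two_ne_zero he
  have h₀₂ : e ≠ e + (2 : ℝ) • m := by simpa using hm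
  have h₁₂ : -e ≠ e + (2 : ℝ) • m := by
    intro h
    have hinner := congrArg (⟪·, m⟫_ℝ) h
    simp [inner_add_left, real_inner_smul_left, hem, hm] at hinner
  intro k l
  fin_cases k <;> fin_cases l <;>
    simp [apex, h₀₁, h₀₁.symm, h₀₂, h₀₂.symm, h₁₂, h₁₂.symm]

variable {ι : Type*} {b : ι → V}

theorem dist_eq_sqrt_two_of_orthonormal (hb : Orthonormal ℝ b) {i j : ι} (hij : i ≠ j) :
    dist (b i) (b j) = √2 := by
  rw [dist_eq_norm, eq_comm, Real.sqrt_eq_iff_mul_self_eq zero_le_two (norm_nonneg _),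
    norm_sub_sq_eq_norm_sq_add_norm_sq_real (hb.inner_eq_zero hij), hb.norm_eq_one, hb.norm_eq_one]
  norm_num

variable [Fintype ι]

theorem inner_mean_of_orthonormal (hb : Orthonormal ℝ b) (i : ι) :
    ⟪b i, (Fintype.card ι : ℝ)⁻¹ • ∑ j, b j⟫_ℝ = (Fintype.card ι : ℝ)⁻¹ := by
  rw [Finset.smul_sum]
  exact hb.inner_right_fintype _ i

theorem norm_mean_sq_of_orthonormal (hb : Orthonormal ℝ b) :
    ‖(Fintype.card ι : ℝ)⁻¹ • ∑ j, b j‖ ^ 2 = (Fintype.card ι : ℝ)⁻¹ := by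
  rw [← real_inner_self_eq_norm_sq]
  nth_rw 1 [real_inner_smul_left]
  rw [sum_inner]
  simp only [inner_mean_of_orthonormal hb, Finset.sum_const, Finset.card_univ, nsmul_eq_mul]
  grind

theorem exists_apices_of_orthonormal {n : ℕ} (hn : n ≠ 0) {b : Fin (n + 1) → V}
    (hb : Orthonormal ℝ b) :
    ∃ p : Fin 3 → V, Function.Injective p ∧ ∀ (i : Fin n) (k), dist (b i.succ) (p k) = √2 := by
  have hc : Orthonormal ℝ fun i : Fin n => b i.succ := hb.comp _ (Fin.succ_injective n)
  have hce : ∀ i : Fin n, ⟪b i.succ, b 0⟫_ℝ = 0 := fun i => hb.inner_eq_zero i.succ_ne_zero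
  set m : V := (Fintype.card (Fin n) : ℝ)⁻¹ • ∑ j : Fin n, b j.succ
  have hm : ‖m‖ ^ 2 = (Fintype.card (Fin n) : ℝ)⁻¹ := norm_mean_sq_of_orthonormal hc
  have hm0 : m ≠ 0 := fun h => hn (by simpa [h, eq_comm] using hm)
  have hem : ⟪b 0, m⟫_ℝ = 0 := by
    simp [m, real_inner_smul_right, inner_sum, real_inner_comm, hce]
  refine ⟨apex (b 0) m, apex_injective (hb.ne_zero 0) hm0 hem, fun i k => ?_⟩
  rw [dist_apex (hce i) hem ((inner_mean_of_orthonormal hc i).trans hm.symm) k,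
    dist_eq_sqrt_two_of_orthonormal hb i.succ_ne_zero]

end Apex

section UnitDistRep

variable {V : Type*} {G H : SimpleGraph V} {n m : ℕ}

theorem hasUnitDistRep_of_dist_eq {f : V → EuclideanSpace ℝ (Fin n)} {r : ℝ} (hr : 0 < r)
    (hadj : ∀ ⦃x y⦄, G.Adj x y → dist (f x) (f y) = r)
    (hinj : ∀ ⦃x y⦄, ¬ G.Adj x y → f x = f y → x = y) : G.HasUnitDistRep n := by
  refine ⟨fun x => r⁻¹ • f x, fun x y hxy => ?_, fun x y hxy => ?_⟩
  · have hf : f x = f y := smul_right_injective _ (inv_ne_zero hr.ne') hxy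
    refine hinj (fun h => hr.ne ?_) hf
    rw [← hadj h, hf, dist_self]
  · rw [dist_smul₀, hadj hxy, Real.norm_of_nonneg (inv_nonneg.mpr hr.le), inv_mul_cancel₀ hr.ne']

theorem hasUnitDistRep_of_le (hle : H ≤ G) (hG : G.HasUnitDistRep n) : H.HasUnitDistRep n := by
  obtain ⟨f, hf, hdist⟩ := hG
  exact ⟨f, hf, fun _ _ h => hdist (hle h)⟩

theorem le_udim (h : G.HasUnitDistRep n) (hm : ∀ k, G.HasUnitDistRep k → m ≤ k) : m ≤ G.udim :=
  le_csInf ⟨n, h⟩ hm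

theorem card_lt_of_hasUnitDistRep_of_adj {ι : Type*} [Fintype ι] {v : ι → V} {p : Fin 3 → V}
    {i₀ i₁ : ι} (hne : v i₀ ≠ v i₁) (hp : Function.Injective p)
    (hv : ∀ j, j ≠ i₀ → j ≠ i₁ → ∀ i ≠ j, G.Adj (v i) (v j)) (hvp : ∀ i k, G.Adj (v i) (p k))
    (hG : G.HasUnitDistRep n) : Fintype.card ι < n := by
  obtain ⟨f, hf, hdist⟩ := hG
  have hindep_v : AffineIndependent ℝ (f ∘ v) :=
    affineIndependent_of_dist_eq_of_ne (hf.ne hne) one_ne_zero (fun i => hdist (hvp i 0))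
      fun j hj₀ hj₁ i hij => hdist (hv j hj₀ hj₁ i hij)
  have hcosph : EuclideanGeometry.Cospherical (Set.range (f ∘ p)) :=
    ⟨f (v i₀), 1, Set.forall_mem_range.mpr fun k => hdist (hvp i₀ k).symm⟩
  have hindep_p : AffineIndependent ℝ (f ∘ p) := hcosph.affineIndependent subset_rfl (hf.comp hp)
  have hcard := card_add_card_le_finrank_add_two_of_dist_eq hindep_v hindep_p
    fun i k => hdist (hvp i k)
  rw [Fintype.card_fin, finrank_euclideanSpace_fin] at hcard
  omega

end UnitDistRep

namespace Gmp

variable {α β γ : ℕ}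

/-- The vertex of `G(α, β, γ)` forming the `i`-th part of size 1. -/
def single (i : Fin α) : Σ i : Fin α ⊕ Fin β ⊕ Fin γ, Fin (Gsize α β γ i) :=
  ⟨.inl i, (0 : Fin 1)⟩

/-- The `k`-th vertex of the `j`-th part of size 3 of `G(α, β, γ)`. -/
def triple (j : Fin γ) (k : Fin 3) : Σ i : Fin α ⊕ Fin β ⊕ Fin γ, Fin (Gsize α β γ i) :=
  ⟨.inr (.inr j), k⟩

theorem single_injective : Function.Injective (single : Fin α → Σ i, Fin (Gsize α β γ i)) :=
  fun _ _ h => Sum.inl_injective (congrArg Sigma.fst h)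

theorem triple_injective (j : Fin γ) :
    Function.Injective (triple j : Fin 3 → Σ i, Fin (Gsize α β γ i)) :=
  fun _ _ h => eq_of_heq (Sigma.mk.inj h).2

theorem single_ne_triple (i : Fin α) (j : Fin γ) (k : Fin 3) :
    (single i : Σ i, Fin (Gsize α β γ i)) ≠ triple j k :=
  fun h => Sum.inl_ne_inr (congrArg Sigma.fst h)

theorem adj_single_single {i j : Fin α} (hij : i ≠ j) :
    (Gmp α β γ).Adj (single i) (single j) :=
  Sum.inl_injective.ne hij

theorem adj_single_triple (i : Fin α) (j : Fin γ) (k : Fin 3) :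
    (Gmp α β γ).Adj (single i) (triple j k) :=
  Sum.inl_ne_inr

theorem hasUnitDistRep_zero_one_of_dist_eq {n : ℕ} {v : Fin α → EuclideanSpace ℝ (Fin n)}
    {p : Fin 3 → EuclideanSpace ℝ (Fin n)} {r : ℝ} (hr : 0 < r) (hp : Function.Injective p)
    (hv : ∀ i j, i ≠ j → dist (v i) (v j) = r) (hvp : ∀ i k, dist (v i) (p k) = r) :
    (Gmp α 0 1).HasUnitDistRep n := by
  let f : (Σ i, Fin (Gsize α 0 1 i)) → EuclideanSpace ℝ (Fin n)
    | ⟨.inl i, _⟩ => v i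
    | ⟨.inr (.inr _), k⟩ => p k
  refine hasUnitDistRep_of_dist_eq (f := f) hr ?_ ?_
  · rintro ⟨i | i | i, k⟩ ⟨j | j | j, l⟩ hadj
    · exact hv i j fun h => hadj (congrArg Sum.inl h)
    · exact j.elim0
    · exact hvp i l
    · exact i.elim0
    · exact i.elim0
    · exact i.elim0
    · exact (dist_comm _ _).trans (hvp j k)
    · exact j.elim0
    · exact absurd (congrArg (Sum.inr ∘ Sum.inr) (Subsingleton.elim i j)) hadj
  · rintro ⟨i, k⟩ ⟨j, l⟩ hadj hf
    obtain rfl : i = j := not_ne_iff.mp hadj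
    rcases i with i | i | i
    · exact congrArg (Sigma.mk (Sum.inl i)) (Subsingleton.elim (α := Fin 1) k l)
    · exact i.elim0
    · exact congrArg (Sigma.mk _) (hp hf)

theorem hasUnitDistRep_zero_one (hα : α ≠ 0) : (Gmp α 0 1).HasUnitDistRep (α + 1) := by
  have hb := (EuclideanSpace.basisFun (Fin (α + 1)) ℝ).orthonormal
  obtain ⟨p, hp, hdist⟩ := exists_apices_of_orthonormal hα hb
  exact hasUnitDistRep_zero_one_of_dist_eq (Real.sqrt_pos.mpr two_pos) hp
    (fun i j hij => dist_eq_sqrt_two_of_orthonormal hb ((Fin.succ_injective α).ne hij)) hdist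

theorem lt_of_hasUnitDistRep_deleteEdges {i₀ i₁ : Fin α} (h₀₁ : i₀ ≠ i₁) (j : Fin γ) {n : ℕ}
    (h : ((Gmp α β γ).deleteEdges {s(single i₀, single i₁)}).HasUnitDistRep n) : α < n := by
  have hadj : ∀ ⦃x y⦄, (Gmp α β γ).Adj x y → y ≠ single i₀ → y ≠ single i₁ →
      ((Gmp α β γ).deleteEdges {s(single i₀, single i₁)}).Adj x y := by
    intro x y hxy hy₀ hy₁
    rw [SimpleGraph.deleteEdges_adj, Set.mem_singleton_iff, Sym2.eq_iff]
    exact ⟨hxy, by rintro (⟨-, hy⟩ | ⟨-, hy⟩) <;> contradiction⟩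
  have hcard := card_lt_of_hasUnitDistRep_of_adj (single_injective.ne h₀₁) (triple_injective j)
    (fun i hi₀ hi₁ k hki => hadj (adj_single_single hki) (single_injective.ne hi₀)
      (single_injective.ne hi₁))
    (fun i k => hadj (adj_single_triple i j k) (single_ne_triple i₀ j k).symm
      (single_ne_triple i₁ j k).symm) h
  rwa [Fintype.card_fin] at hcard

end Gmp

theorem Gmp_alpha_zero_one_not_dimCritical (α : ℕ) (hα : 2 ≤ α) :
    ¬ (Gmp α 0 1).IsDimCritical := by
  intro hcrit
  have hrep : (Gmp α 0 1).HasUnitDistRep (α + 1) := Gmp.hasUnitDistRep_zero_one (by omega)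
  have hupper : (Gmp α 0 1).udim ≤ α + 1 := Nat.sInf_le hrep
  have h₀₁ : (⟨0, by omega⟩ : Fin α) ≠ ⟨1, by omega⟩ := by simp
  have hlower := le_udim (hasUnitDistRep_of_le (SimpleGraph.deleteEdges_le _) hrep)
    fun n hn => Gmp.lt_of_hasUnitDistRep_deleteEdges h₀₁ 0 hn
  exact (hcrit _ (Gmp.adj_single_single h₀₁)).not_ge (hupper.trans hlower)
end

section
/- For every integer n ≥ 2 and every positive integer c, there exists a dimension-critical finite simple graph H such that dim(H) = n + 2 and H has more than c edges. -/
/-!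
In a unit-distance representation of `K_{n+1} ∨ H` the part `K_{n+1}` is a regular unit simplex, and
`H` lies in the affine subspace through its centre orthogonal to it, on the sphere about the centre
of squared radius `(n + 2) / (2 * (n + 1))`. Conversely every such spherical representation of `H`
extends, so `K_{n+1} ∨ H` fits into `ℝ^{n+m}` iff `H` fits onto that sphere in `ℝ^m`.

For `m = 2` the sphere is a circle on which unit steps are rotations by the angle
`arccos (1 / (n + 2))`. By Niven's theorem this is not a rational multiple of `π` when `n ≠ 0`, so
every path fits onto the circle but no cycle does, whereas odd cycles fit onto the sphere in `ℝ^3`.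
Hence for odd `k ≥ 3` the graph `K_{n+1} ∨ C_k` has dimension `n + 3`, and deleting any edge of
`C_k` lowers it. A critical subgraph of dimension `n + 3` therefore contains all `k` edges of `C_k`.
-/

open Module
open SimpleGraph hiding dist dist_comm dist_self

/-- The join of two graphs: their disjoint union together with all edges between the two parts. -/
def graphJoin {V W : Type*} (G : SimpleGraph V) (H : SimpleGraph W) : SimpleGraph (V ⊕ W) :=
  (G ⊕g H) ⊔ completeBipartiteGraph V W

/-- The cycle graph of length `k`, with vertices labelled by `ZMod k` rather than by `Fin k` as in
`SimpleGraph.cycleGraph`, so that rotations are given by ring operations. -/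
def zmodCycle (k : ℕ) : SimpleGraph (ZMod k) :=
  circulantGraph {1}

/-- `G` has an injective unit-distance representation in `ℝ^n` by points of the sphere about the
origin of *squared* radius `q`. -/
def HasSphericalRep {V : Type*} (G : SimpleGraph V) (n : ℕ) (q : ℝ) : Prop :=
  ∃ f : V → EuclideanSpace ℝ (Fin n),
    Function.Injective f ∧ (∀ ⦃u v⦄, G.Adj u v → dist (f u) (f v) = 1) ∧ ∀ v, ‖f v‖ ^ 2 = q

section Representations

variable {V W E : Type*} {G : SimpleGraph V} {H : SimpleGraph W} {m n : ℕ} {q r : ℝ}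
  [NormedAddCommGroup E] [InnerProductSpace ℝ E] [FiniteDimensional ℝ E]

lemma nonempty_linearIsometry_of_finrank_le {F : Type*} [NormedAddCommGroup F]
    [InnerProductSpace ℝ F] [FiniteDimensional ℝ F] (h : finrank ℝ E ≤ finrank ℝ F) :
    Nonempty (E →ₗᵢ[ℝ] F) := by
  let b := stdOrthonormalBasis ℝ E
  let b' : Fin (finrank ℝ E) → F := stdOrthonormalBasis ℝ F ∘ Fin.castLE h
  have hb' : Orthonormal ℝ b' :=
    (stdOrthonormalBasis ℝ F).orthonormal.comp _ (Fin.castLE_injective h)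
  refine ⟨(b.toBasis.constr ℝ b').isometryOfOrthonormal (v := b.toBasis) (by simp) ?_⟩
  rwa [show b.toBasis.constr ℝ b' ∘ b.toBasis = b' from funext (b.toBasis.constr_basis ℝ b')]

lemma hasUnitDistRep_of_finrank_le (hE : finrank ℝ E ≤ n) {f : V → E} (hf : f.Injective)
    (hadj : ∀ ⦃u v⦄, G.Adj u v → dist (f u) (f v) = 1) : G.HasUnitDistRep n := by
  obtain ⟨L⟩ := nonempty_linearIsometry_of_finrank_le (E := E)
    (F := EuclideanSpace ℝ (Fin n)) (by rwa [finrank_euclideanSpace_fin])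
  exact ⟨L ∘ f, L.injective.comp hf, fun u v huv ↦ (L.dist_map _ _).trans (hadj huv)⟩

lemma hasUnitDistRep_of_le_s19 (hmn : m ≤ n) (hG : G.HasUnitDistRep m) : G.HasUnitDistRep n := by
  obtain ⟨f, hf, hadj⟩ := hG
  exact hasUnitDistRep_of_finrank_le (by rwa [finrank_euclideanSpace_fin]) hf hadj

lemma hasUnitDistRep_of_isContained (hGH : G.IsContained H) (hH : H.HasUnitDistRep n) :
    G.HasUnitDistRep n := by
  obtain ⟨φ⟩ := hGH
  obtain ⟨f, hf, hadj⟩ := hH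
  exact ⟨f ∘ φ, hf.comp φ.injective, fun u v huv ↦ hadj (φ.toHom.map_adj huv)⟩

lemma udim_eq_succ_iff : G.udim = n + 1 ↔ G.HasUnitDistRep (n + 1) ∧ ¬ G.HasUnitDistRep n := by
  constructor
  · intro h
    have hne : {i | G.HasUnitDistRep i}.Nonempty :=
      Nat.nonempty_of_pos_sInf (h.symm ▸ n.succ_pos : 0 < G.udim)
    exact ⟨h ▸ Nat.sInf_mem hne, fun hn ↦ by
      have : G.udim ≤ n := Nat.sInf_le hn
      omega⟩
  · rintro ⟨hsucc, hn⟩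
    refine le_antisymm (Nat.sInf_le hsucc) (le_csInf ⟨_, hsucc⟩ fun i hi ↦ ?_)
    by_contra! hlt
    exact hn (hasUnitDistRep_of_le_s19 (Nat.lt_succ_iff.1 hlt) hi)

lemma hasSphericalRep_of_finrank_le (hE : finrank ℝ E ≤ n) {f : V → E} (hf : f.Injective)
    (hadj : ∀ ⦃u v⦄, G.Adj u v → dist (f u) (f v) = 1) (hnorm : ∀ v, ‖f v‖ ^ 2 = q) :
    HasSphericalRep G n q := by
  obtain ⟨L⟩ := nonempty_linearIsometry_of_finrank_le (E := E)
    (F := EuclideanSpace ℝ (Fin n)) (by rwa [finrank_euclideanSpace_fin])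
  exact ⟨L ∘ f, L.injective.comp hf, fun u v huv ↦ (L.dist_map _ _).trans (hadj huv),
    fun v ↦ by simp [hnorm]⟩

lemma finrank_withLp_prod_euclideanSpace (m n : ℕ) :
    finrank ℝ (WithLp 2 (EuclideanSpace ℝ (Fin m) × EuclideanSpace ℝ (Fin n))) = m + n := by
  simp [(WithLp.linearEquiv 2 ℝ _).finrank_eq]

lemma hasSphericalRep_succ_of_le (hqr : q ≤ r) (hG : HasSphericalRep G n q) :
    HasSphericalRep G (n + 1) r := by
  obtain ⟨f, hf, hadj, hnorm⟩ := hG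
  let height : EuclideanSpace ℝ (Fin 1) := !₂[√(r - q)]
  refine hasSphericalRep_of_finrank_le (finrank_withLp_prod_euclideanSpace n 1).le
    (f := fun v ↦ WithLp.toLp 2 (f v, height)) (fun u v huv ↦ hf ?_) (fun u v huv ↦ ?_)
    fun v ↦ ?_
  · exact congrArg WithLp.fst huv
  · simp [WithLp.prod_dist_eq_of_L2, hadj huv]
  · simp [WithLp.prod_norm_sq_eq_of_L2, hnorm, height, EuclideanSpace.norm_sq_eq, hqr]

lemma hasUnitDistRep_graphJoin (hqr : q + r = 1) (hG : HasSphericalRep G m q)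
    (hH : HasSphericalRep H n r) : (graphJoin G H).HasUnitDistRep (m + n) := by
  obtain ⟨f, hf, hfadj, hfnorm⟩ := hG
  obtain ⟨g, hg, hgadj, hgnorm⟩ := hH
  let h : V ⊕ W → WithLp 2 (EuclideanSpace ℝ (Fin m) × EuclideanSpace ℝ (Fin n)) :=
    Sum.elim (fun v ↦ WithLp.toLp 2 (f v, 0)) (fun w ↦ WithLp.toLp 2 (0, g w))
  have hcross (v : V) (w : W) : dist (h (.inl v)) (h (.inr w)) = 1 := by
    simp [h, WithLp.prod_dist_eq_of_L2, hfnorm, hgnorm, hqr]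
  refine hasUnitDistRep_of_finrank_le (finrank_withLp_prod_euclideanSpace m n).le (f := h) ?_ ?_
  · refine Function.Injective.sumElim (fun u v huv ↦ hf (congrArg WithLp.fst huv))
      (fun u v huv ↦ hg (congrArg WithLp.snd huv)) fun v w hvw ↦ ?_
    exact zero_ne_one <| (dist_eq_zero.2 hvw).symm.trans (hcross v w)
  · rintro (u | u) (v | v) huv
    · simpa [h, WithLp.prod_dist_eq_of_L2] using hfadj (by simpa [graphJoin] using huv)
    · exact hcross u v
    · exact (dist_comm _ _).trans (hcross v u)
    · simpa [h, WithLp.prod_dist_eq_of_L2] using hgadj (by simpa [graphJoin] using huv)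

end Representations

section CriticalSubgraphs

variable {V : Type*} {G : SimpleGraph V} {n : ℕ}

lemma deleteEdges_toSimpleGraph_isContained (C : G.ConnectedComponent) (e : Sym2 C) :
    (C.toSimpleGraph.deleteEdges {e}).IsContained (G.deleteEdges {e.map (↑)}) := by
  refine ⟨⟨⟨Subtype.val, fun {u v} huv ↦ ?_⟩, Subtype.val_injective⟩⟩
  rw [deleteEdges_adj] at huv ⊢
  refine ⟨huv.1, fun he ↦ huv.2 (Sym2.map.injective Subtype.val_injective ?_)⟩
  simpa using he

lemma ncard_le_card_edgeSet_of_isContained {W : Type*} [Finite W] {H : SimpleGraph W}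
    (hHG : H.IsContained G) (hH : ¬ H.HasUnitDistRep n) :
    {e | (G.deleteEdges {e}).HasUnitDistRep n}.ncard ≤ Nat.card H.edgeSet := by
  obtain ⟨φ⟩ := hHG
  have hsub : {e | (G.deleteEdges {e}).HasUnitDistRep n} ⊆ Sym2.map φ '' H.edgeSet := by
    intro e he
    by_contra hcon
    refine hH (hasUnitDistRep_of_isContained (H := G.deleteEdges {e})
      ⟨⟨⟨φ, fun {u v} huv ↦ ?_⟩, φ.injective⟩⟩ he)
    rw [deleteEdges_adj]
    exact ⟨φ.toHom.map_adj huv, fun h ↦ hcon ⟨s(u, v), huv, h⟩⟩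
  calc _ ≤ (Sym2.map φ '' H.edgeSet).ncard := Set.ncard_le_ncard hsub
    _ ≤ H.edgeSet.ncard := Set.ncard_image_le
    _ = Nat.card H.edgeSet := rfl

lemma exists_translates_disjoint {ι E : Type*} {α : ι → Type*} [Finite ι] [∀ i, Finite (α i)]
    [NormedAddCommGroup E] [NormedSpace ℝ E] [Nontrivial E] (f : ∀ i, α i → E) :
    ∃ t : ι → E, ∀ i j, i ≠ j → ∀ x y, f i x + t i ≠ f j y + t j := by
  obtain ⟨M, hM⟩ := (Set.finite_range fun p : Σ i, α i ↦ ‖f p.1 p.2‖).bddAbove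
  have hbound (i : ι) (x : α i) : ‖f i x‖ ≤ M := hM ⟨⟨i, x⟩, rfl⟩
  obtain ⟨u, hu⟩ := exists_norm_eq E zero_le_one
  let e := Finite.equivFin ι
  refine ⟨fun i ↦ ((2 * M + 1) * (e i : ℕ)) • u, fun i j hij x y h ↦ ?_⟩
  have hsub : f i x - f j y = ((2 * M + 1) * ((e j : ℕ) - (e i : ℕ))) • u := by
    rw [mul_sub, sub_smul, sub_eq_sub_iff_add_eq_add, h, add_comm]
  have hgap : (1 : ℝ) ≤ |((e j : ℕ) : ℝ) - (e i : ℕ)| := by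
    have hne : ((e j : ℕ) : ℤ) - (e i : ℕ) ≠ 0 := by
      rw [sub_ne_zero, Nat.cast_injective.ne_iff, ← Fin.ext_iff.ne]
      exact e.injective.ne hij.symm
    exact_mod_cast Int.one_le_abs hne
  have hM0 : 0 ≤ M := (norm_nonneg _).trans (hbound i x)
  have hfar : 2 * M + 1 ≤ ‖f i x - f j y‖ := by
    rw [hsub, norm_smul, hu, mul_one, Real.norm_eq_abs, abs_mul, abs_of_nonneg (by positivity)]
    exact le_mul_of_one_le_right (by positivity) hgap
  linarith [norm_sub_le (f i x) (f j y), hbound i x, hbound j y]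

variable [Finite V]

lemma hasUnitDistRep_of_forall_connectedComponent (hn : n ≠ 0)
    (h : ∀ C : G.ConnectedComponent, C.toSimpleGraph.HasUnitDistRep n) : G.HasUnitDistRep n := by
  choose f hf hadj using h
  have : Nonempty (Fin n) := Fin.pos_iff_nonempty.1 (Nat.pos_of_ne_zero hn)
  obtain ⟨t, ht⟩ := exists_translates_disjoint f
  let g (v : V) := f (G.connectedComponentMk v) ⟨v, rfl⟩ + t (G.connectedComponentMk v)
  have hg (C : G.ConnectedComponent) (v : C) : g v = f C v + t C := by
    obtain ⟨v, rfl⟩ := v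
    rfl
  refine ⟨g, fun u v huv ↦ ?_, fun u v huv ↦ ?_⟩
  · have hC : G.connectedComponentMk u = G.connectedComponentMk v := by
      by_contra hne
      exact ht _ _ hne _ _ huv
    have huv' := (hg _ ⟨u, hC⟩).symm.trans (huv.trans (hg _ ⟨v, rfl⟩))
    exact congrArg Subtype.val (hf _ (add_right_cancel huv'))
  · have hC := ConnectedComponent.connectedComponentMk_eq_of_adj huv
    rw [hg _ ⟨u, hC⟩, hg _ ⟨v, rfl⟩, dist_add_right]
    exact hadj _ huv

lemma exists_dimCritical_isContained (hn : n ≠ 0) (hG : G.udim = n + 1) :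
    ∃ (s : Set V) (H : SimpleGraph s),
      H.IsContained G ∧ H.Connected ∧ H.IsDimCritical ∧ H.udim = n + 1 := by
  obtain ⟨hsucc, hnot⟩ := udim_eq_succ_iff.1 hG
  obtain ⟨K, hKG, hK⟩ := (Set.toFinite {K : SimpleGraph V | ¬ K.HasUnitDistRep n}).exists_le_minimal
    hnot
  have hdelete {e} (he : e ∈ K.edgeSet) : (K.deleteEdges {e}).HasUnitDistRep n := by
    by_contra hcon
    have : K ≤ K.deleteEdges {e} := hK.2 hcon (deleteEdges_le _)
    simpa using edgeSet_mono this he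
  obtain ⟨C, hC⟩ : ∃ C : K.ConnectedComponent, ¬ C.toSimpleGraph.HasUnitDistRep n := by
    by_contra! hcon
    exact hK.1 (hasUnitDistRep_of_forall_connectedComponent hn hcon)
  have hCG : C.toSimpleGraph.IsContained G :=
    IsContained.mono_right ⟨C.toSimpleGraph_hom, Subtype.val_injective⟩ hKG
  have hdim := udim_eq_succ_iff.2 ⟨hasUnitDistRep_of_isContained hCG hsucc, hC⟩
  refine ⟨C.supp, C.toSimpleGraph, hCG, C.connected_toSimpleGraph, fun e he ↦ ?_, hdim⟩
  have hmem : e.map (↑) ∈ K.edgeSet := C.toSimpleGraph_hom.map_mem_edgeSet he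
  rw [hdim, Nat.lt_succ_iff]
  exact Nat.sInf_le <|
    hasUnitDistRep_of_isContained (deleteEdges_toSimpleGraph_isContained C e) (hdelete hmem)

end CriticalSubgraphs

section UnitSimplices

variable {ι E : Type*} [NormedAddCommGroup E] [InnerProductSpace ℝ E]

lemma affineIndependent_of_pairwise_dist_eq {P : Type*} [MetricSpace P] [NormedAddTorsor E P]
    {p : ι → P} {r : ℝ} (hr : r ≠ 0) (hp : Pairwise fun i j ↦ dist (p i) (p j) = r) :
    AffineIndependent ℝ p := by
  classical
  intro s a ha hap
  have hrow (i) (hi : i ∈ s) :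
      ∑ j ∈ s, a i * a j * (dist (p i) (p j) * dist (p i) (p j)) = -(r ^ 2 * a i ^ 2) := by
    have hterm (j) : a i * a j * (dist (p i) (p j) * dist (p i) (p j))
        = r ^ 2 * a i * a j - if i = j then r ^ 2 * a i * a j else 0 := by
      split_ifs with hij
      · simp [hij]
      · rw [hp hij]
        ring
    rw [Finset.sum_congr rfl fun j _ ↦ hterm j, Finset.sum_sub_distrib, ← Finset.mul_sum, ha,
      Finset.sum_ite_eq, if_pos hi]
    ring
  have hsum : ∑ i ∈ s, r ^ 2 * a i ^ 2 = 0 := by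
    have hinner := EuclideanGeometry.inner_weightedVSub p ha p ha
    rw [hap, inner_zero_left, Finset.sum_congr rfl hrow, Finset.sum_neg_distrib] at hinner
    linarith
  intro i hi
  have := (Finset.sum_eq_zero_iff_of_nonneg fun j _ ↦ by positivity).1 hsum i hi
  simpa [hr] using this

variable [Fintype ι] [Nonempty ι] {p : ι → E} {v : E}

lemma centroid_sub_eq_smul_sum (p : ι → E) (v : E) :
    Finset.univ.centroid ℝ p - v = (Fintype.card ι : ℝ)⁻¹ • ∑ i, (p i - v) := by
  have hweights := Finset.univ.sum_centroidWeights_eq_one_of_nonempty ℝ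
    (Finset.univ_nonempty (α := ι))
  rw [Finset.centroid_def, ← vsub_eq_sub,
    ← Finset.univ.sum_smul_vsub_const_eq_affineCombination_vsub _ p v hweights, Finset.smul_sum]
  simp only [Finset.centroidWeights_apply, Finset.card_univ, vsub_eq_sub]

lemma inner_sub_centroid_sub (hp : Pairwise fun i j ↦ dist (p i) (p j) = 1)
    (hv : ∀ i, dist (p i) v = 1) (i : ι) :
    inner ℝ (p i - v) (Finset.univ.centroid ℝ p - v)
      = (Fintype.card ι + 1) / (2 * Fintype.card ι) := by
  classical
  have hgram (j : ι) : inner ℝ (p i - v) (p j - v) = 1 / 2 + if i = j then 1 / 2 else 0 := by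
    rw [real_inner_eq_norm_mul_self_add_norm_mul_self_sub_norm_sub_mul_self_div_two,
      sub_sub_sub_cancel_right, ← dist_eq_norm, ← dist_eq_norm, ← dist_eq_norm, hv, hv]
    split_ifs with hij
    · norm_num [hij]
    · norm_num [hp hij]
  simp only [centroid_sub_eq_smul_sum, inner_smul_right, inner_sum, hgram,
    Finset.sum_add_distrib, Finset.sum_const, Finset.sum_ite_eq, Finset.mem_univ, if_true,
    Finset.card_univ, nsmul_eq_mul]
  field_simp

lemma norm_centroid_sub_sq (hp : Pairwise fun i j ↦ dist (p i) (p j) = 1)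
    (hv : ∀ i, dist (p i) v = 1) :
    ‖Finset.univ.centroid ℝ p - v‖ ^ 2 = (Fintype.card ι + 1) / (2 * Fintype.card ι) := by
  rw [← real_inner_self_eq_norm_sq]
  nth_rw 1 [centroid_sub_eq_smul_sum]
  simp only [real_inner_smul_left, sum_inner, inner_sub_centroid_sub hp hv, Finset.sum_const,
    Finset.card_univ, nsmul_eq_mul]
  field_simp

lemma centroid_sub_mem_orthogonal_vectorSpan (hp : Pairwise fun i j ↦ dist (p i) (p j) = 1)
    (hv : ∀ i, dist (p i) v = 1) :
    Finset.univ.centroid ℝ p - v ∈ (vectorSpan ℝ (Set.range p))ᗮ := by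
  suffices vectorSpan ℝ (Set.range p) ≤ (ℝ ∙ (Finset.univ.centroid ℝ p - v))ᗮ from
    (Submodule.le_orthogonal_iff_le_orthogonal.1 this) (Submodule.mem_span_singleton_self _)
  rw [vectorSpan_range_eq_span_range_vsub_right ℝ p (Classical.arbitrary ι), Submodule.span_le]
  rintro _ ⟨i, rfl⟩
  simp only [SetLike.mem_coe, Submodule.mem_orthogonal_singleton_iff_inner_left, vsub_eq_sub]
  rw [← sub_sub_sub_cancel_right _ _ v, inner_sub_left, inner_sub_centroid_sub hp hv,
    inner_sub_centroid_sub hp hv, sub_self]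

end UnitSimplices

section JoinWithCompleteGraph

variable {V W : Type*} {G : SimpleGraph V} {H : SimpleGraph W} {m n : ℕ}

lemma hasSphericalRep_top (n : ℕ) :
    HasSphericalRep (⊤ : SimpleGraph (Fin (n + 1))) n (n / (2 * (n + 1))) := by
  let ones : EuclideanSpace ℝ (Fin (n + 1)) := WithLp.toLp 2 1
  let e (i : Fin (n + 1)) : EuclideanSpace ℝ (Fin (n + 1)) := EuclideanSpace.single i (√2)⁻¹
  let c : EuclideanSpace ℝ (Fin (n + 1)) := (√2 * (n + 1))⁻¹ • ones
  have he_sq (i) : ‖e i‖ ^ 2 = 2⁻¹ := by simp [e]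
  have he_inner {i j} (hij : i ≠ j) : inner ℝ (e i) (e j) = 0 := by
    simp [e, EuclideanSpace.inner_single_left, hij]
  have hones (i) : inner ℝ (e i) ones = (√2)⁻¹ := by
    simp [ones, e, EuclideanSpace.inner_single_left]
  have hones_sq : ‖ones‖ ^ 2 = n + 1 := by simp [ones, EuclideanSpace.norm_sq_eq]
  have hmem (i) : e i - c ∈ (ℝ ∙ ones)ᗮ := by
    rw [Submodule.mem_orthogonal_singleton_iff_inner_left, inner_sub_left, real_inner_smul_left,
      hones, real_inner_self_eq_norm_sq, hones_sq]
    field_simp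
    simp
  have hdist {i j} (hij : i ≠ j) : dist (e i) (e j) = 1 := by
    rw [← sq_eq_sq₀ dist_nonneg zero_le_one, dist_eq_norm, norm_sub_sq_real, he_sq, he_sq,
      he_inner hij]
    norm_num
  have hnorm (i) : ‖e i - c‖ ^ 2 = n / (2 * (n + 1)) := by
    rw [norm_sub_sq_real, inner_smul_right, norm_smul, mul_pow, he_sq, hones, hones_sq,
      Real.norm_eq_abs, sq_abs]
    field_simp
    norm_num
    ring
  have hones_ne : ones ≠ 0 := fun h ↦ n.cast_add_one_ne_zero (R := ℝ) <| by
    simp [← hones_sq, h]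
  have : Fact (finrank ℝ (EuclideanSpace ℝ (Fin (n + 1))) = n + 1) := ⟨by simp⟩
  refine hasSphericalRep_of_finrank_le (Submodule.finrank_orthogonal_span_singleton hones_ne).le
    (f := fun i ↦ ⟨e i - c, hmem i⟩) (fun i j hij ↦ ?_)
    (fun i j hij ↦ (dist_sub_right _ _ _).trans (hdist hij)) hnorm
  by_contra hne
  have := hdist hne
  simp [sub_left_injective (congrArg Subtype.val hij)] at this

lemma hasUnitDistRep_graphJoin_top_iff :
    (graphJoin (⊤ : SimpleGraph (Fin (n + 1))) H).HasUnitDistRep (n + m)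
      ↔ HasSphericalRep H m ((n + 2) / (2 * (n + 1))) := by
  refine ⟨fun ⟨f, hf, hadj⟩ ↦ ?_, fun hH ↦ ?_⟩
  · let p := f ∘ Sum.inl
    let c := Finset.univ.centroid ℝ p
    have hp : Pairwise fun i j ↦ dist (p i) (p j) = 1 :=
      fun i j hij ↦ hadj (by simpa [graphJoin] using hij)
    have hv (w) (i) : dist (p i) (f (.inr w)) = 1 := hadj (by simp [graphJoin])
    have hfinrank : finrank ℝ (vectorSpan ℝ (Set.range p))ᗮ = m := by
      have hcard : Fintype.card (Fin (n + 1)) = n + 1 := Fintype.card_fin _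
      have := (vectorSpan ℝ (Set.range p)).finrank_add_finrank_orthogonal
      rw [(affineIndependent_of_pairwise_dist_eq one_ne_zero hp).finrank_vectorSpan hcard,
        finrank_euclideanSpace_fin] at this
      exact Nat.add_left_cancel this
    refine hasSphericalRep_of_finrank_le hfinrank.le
      (f := fun w ↦ ⟨c - f (.inr w), centroid_sub_mem_orthogonal_vectorSpan hp (hv w)⟩)
      (fun u w huw ↦ ?_) (fun u w huw ↦ ?_) fun w ↦ ?_
    · exact Sum.inr_injective (hf (sub_right_injective (congrArg Subtype.val huw)))
    · rw [Subtype.dist_eq, dist_sub_left]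
      exact hadj (by simpa [graphJoin] using huw)
    · rw [Submodule.coe_norm, norm_centroid_sub_sq hp (hv w), Fintype.card_fin]
      push_cast
      ring
  · refine hasUnitDistRep_graphJoin ?_ (hasSphericalRep_top n) hH
    field_simp
    ring

lemma graphJoin_deleteEdges_inr (u v : W) :
    (graphJoin G H).deleteEdges {s(.inr u, .inr v)} = graphJoin G (H.deleteEdges {s(u, v)}) := by
  ext (a | a) (b | b) <;> simp [graphJoin]

end JoinWithCompleteGraph

section Rotations

variable {V : Type*} {G : SimpleGraph V} {k : ℕ} {w : Circle}

lemma norm_circle_sub_one_sq (w : Circle) : ‖(w : ℂ) - 1‖ ^ 2 = 2 - 2 * (w : ℂ).re := by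
  rw [norm_sub_sq_real, Circle.norm_coe, Complex.inner]
  norm_num
  ring

lemma hasSphericalRep_two_of_rotation (hw : w ≠ 1) {g : V → Circle} (hg : g.Injective)
    (hadj : ∀ ⦃u v⦄, G.Adj u v → g v = w * g u ∨ g u = w * g v) :
    HasSphericalRep G 2 (‖(w : ℂ) - 1‖ ^ 2)⁻¹ := by
  have hw' : (w : ℂ) - 1 ≠ 0 := sub_ne_zero.2 fun h ↦ hw (Circle.ext h)
  have hdist {x y : Circle} (hxy : y = w * x) : dist (x / ((w : ℂ) - 1)) (y / (w - 1)) = 1 := by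
    rw [dist_comm, dist_eq_norm, ← sub_div, hxy, Circle.coe_mul, ← sub_one_mul, norm_div, norm_mul,
      Circle.norm_coe, mul_one, div_self (norm_ne_zero_iff.2 hw')]
  refine hasSphericalRep_of_finrank_le Complex.finrank_real_complex.le
    (f := fun v ↦ (g v : ℂ) / (w - 1)) (fun u v huv ↦ hg (Circle.ext ?_)) (fun u v huv ↦ ?_)
    fun v ↦ ?_
  · exact (div_left_inj' hw').1 huv
  · exact (hadj huv).elim hdist fun h ↦ (dist_comm _ _).trans (hdist h)
  · rw [norm_div, Circle.norm_coe, one_div, inv_pow]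

lemma eq_mul_or_eq_inv_mul_of_norm_sub_eq {x y : ℂ} (hnorm : ‖y‖ = ‖x‖)
    (hsub : ‖y - x‖ = ‖(w : ℂ) - 1‖ * ‖x‖) : y = w • x ∨ y = w⁻¹ • x := by
  rcases eq_or_ne x 0 with rfl | hx
  · simpa using hnorm
  obtain ⟨u, rfl⟩ : ∃ u : Circle, y = u * x :=
    ⟨⟨y / x, by simp [Submonoid.unitSphere, hnorm, hx]⟩, (div_mul_cancel₀ y hx).symm⟩
  have hsub' : ‖(u : ℂ) - 1‖ = ‖(w : ℂ) - 1‖ := by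
    rwa [← sub_one_mul, norm_mul, mul_left_inj' (norm_ne_zero_iff.2 hx)] at hsub
  have hre : (u : ℂ).re = (w : ℂ).re := by
    linarith [norm_circle_sub_one_sq u, norm_circle_sub_one_sq w, congrArg (· ^ 2) hsub']
  have him : (u : ℂ).im ^ 2 = (w : ℂ).im ^ 2 := by
    have hu := Circle.normSq_coe u
    have hw := Circle.normSq_coe w
    rw [Complex.normSq_apply] at hu hw
    rw [hre] at hu
    linarith
  rw [Circle.smul_def, Circle.smul_def, Circle.coe_inv_eq_conj]
  exact (sq_eq_sq_iff_eq_or_eq_neg.1 him).imp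
    (fun h ↦ congrArg (· * x) (Complex.ext hre h)) fun h ↦ congrArg (· * x) (Complex.ext hre h)

lemma zmod_two_ne_zero (hk : 3 ≤ k) : (2 : ZMod k) ≠ 0 := by
  have : Fact (1 < k) := ⟨by lia⟩
  exact Ring.two_ne_zero (by rw [ZMod.ringChar_zmod_n]; lia)

lemma zmodCycle_adj {x y : ZMod k} : (zmodCycle k).Adj x y ↔ x ≠ y ∧ (y = x + 1 ∨ x = y + 1) := by
  simp only [zmodCycle, circulantGraph_adj, Set.mem_singleton_iff, sub_eq_iff_eq_add', ne_eq]
  tauto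

lemma zmodCycle_adj_add_one (hk : 2 ≤ k) (x : ZMod k) : (zmodCycle k).Adj x (x + 1) := by
  have : Fact (1 < k) := ⟨hk⟩
  simp [zmodCycle_adj]

lemma pow_smul_eq_of_forall_eq_smul_or_eq_inv_smul {M α : Type*} [Group M] [MulAction M α] {w : M}
    {z : ZMod k → α} (hk : 3 ≤ k) (hz : z.Injective)
    (hstep : ∀ x, z (x + 1) = w • z x ∨ z (x + 1) = w⁻¹ • z x) : w ^ k • z 0 = z 0 := by
  wlog h₀ : z (0 + 1) = w • z 0 generalizing w
  · have := this (w := w⁻¹) (fun x ↦ by simpa using (hstep x).symm) ((hstep 0).resolve_left h₀)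
    rwa [inv_pow, inv_smul_eq_iff, eq_comm] at this
  -- A step back would revisit the previous point, so all steps turn the same way.
  have hback (x) (hx : z (x + 1) = w • z x) : z (x + 1 + 1) ≠ w⁻¹ • z (x + 1) := fun h ↦ by
    rw [hx, inv_smul_smul] at h
    exact zmod_two_ne_zero hk (by linear_combination hz h)
  have hforward (n : ℕ) : z (n + 1) = w • z n := by
    induction n with
    | zero => simpa using h₀
    | succ n ih =>
      push_cast
      exact (hstep _).resolve_right (hback _ ih)
  have hpow (n : ℕ) : w ^ n • z 0 = z n := by
    induction n with
    | zero => simp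
    | succ n ih => rw [pow_succ', mul_smul, ih, ← hforward, Nat.cast_succ]
  simpa using hpow k

lemma pow_eq_one_of_hasSphericalRep_zmodCycle (hk : 3 ≤ k)
    (h : HasSphericalRep (zmodCycle k) 2 (‖(w : ℂ) - 1‖ ^ 2)⁻¹) : w ^ k = 1 := by
  obtain ⟨f, hf, hadj, hnorm⟩ := h
  let L := Complex.orthonormalBasisOneI.repr.symm
  let z (x : ZMod k) : ℂ := L (f x)
  have hznorm (x) : ‖z x‖ = ‖(w : ℂ) - 1‖⁻¹ := by
    rw [← sq_eq_sq₀ (norm_nonneg _) (by positivity), inv_pow, ← hnorm x, L.norm_map]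
  have hzdist (x) : ‖z (x + 1) - z x‖ = 1 := by
    rw [← dist_eq_norm, L.dist_map, dist_comm, hadj (zmodCycle_adj_add_one (by lia) x)]
  have hw : ‖(w : ℂ) - 1‖ ≠ 0 := fun h ↦ by
    have h₀ (x) : z x = 0 := by simpa [h] using hznorm x
    simpa [h₀] using hzdist 0
  have hz₀ : z 0 ≠ 0 := by
    rw [← norm_ne_zero_iff, hznorm]
    exact inv_ne_zero hw
  have hpow := pow_smul_eq_of_forall_eq_smul_or_eq_inv_smul hk (L.injective.comp hf) fun x ↦
    eq_mul_or_eq_inv_mul_of_norm_sub_eq (x := z x) (y := z (x + 1)) (w := w)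
      (by rw [hznorm, hznorm]) (by rw [hzdist, hznorm, mul_inv_cancel₀ hw])
  exact Circle.ext (mul_eq_right₀ hz₀ |>.1 hpow)

lemma zmod_val_add_one [NeZero k] {x : ZMod k} (hx : x + 1 ≠ 0) : (x + 1).val = x.val + 1 := by
  have hcast : ((x.val + 1 : ℕ) : ZMod k) = x + 1 := by simp
  have hne : x.val + 1 ≠ k := fun h ↦ hx (by rw [← hcast, h, ZMod.natCast_self])
  rw [← hcast, ZMod.val_cast_of_lt (lt_of_le_of_ne x.val_lt hne)]

lemma hasSphericalRep_zmodCycle_deleteEdges [NeZero k] (hw : ¬ IsOfFinOrder w) (a : ZMod k) :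
    HasSphericalRep ((zmodCycle k).deleteEdges {s(a, a + 1)}) 2 (‖(w : ℂ) - 1‖ ^ 2)⁻¹ := by
  let g (x : ZMod k) : Circle := w ^ (x - (a + 1)).val
  have hg : g.Injective := (injective_pow_iff_not_isOfFinOrder.2 hw).comp <|
    (ZMod.val_injective k).comp sub_left_injective
  have hstep {x : ZMod k} (hx : x ≠ a) : g (x + 1) = w * g x := by
    have hx' : x - (a + 1) + 1 ≠ 0 := by simpa [sub_add_eq_sub_sub, sub_eq_zero] using hx
    rw [← pow_succ', ← zmod_val_add_one hx', sub_add_eq_add_sub]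
  refine hasSphericalRep_two_of_rotation (fun h ↦ hw (h ▸ IsOfFinOrder.one)) hg fun x y hxy ↦ ?_
  obtain ⟨hxy, hne⟩ := deleteEdges_adj.1 hxy
  obtain ⟨-, rfl | rfl⟩ := zmodCycle_adj.1 hxy
  · exact .inl (hstep fun h ↦ hne (by rw [h]; rfl))
  · exact .inr (hstep fun h ↦ hne (by rw [h, Sym2.eq_swap]; rfl))

lemma re_toCircle_nonpos {j : ℕ} (hj : j ≠ 0) :
    ((ZMod.toCircle (j : ZMod (2 * j + 1)) : Circle) : ℂ).re ≤ 0 := by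
  have hangle : 2 * Real.pi * Complex.I * j / (2 * j + 1 : ℕ)
      = ((2 * Real.pi * j / (2 * j + 1) : ℝ) : ℂ) * Complex.I := by
    push_cast
    ring
  have hj' : (1 : ℝ) ≤ j := Nat.one_le_cast.2 (Nat.one_le_iff_ne_zero.2 hj)
  rw [ZMod.toCircle_natCast, hangle, Complex.exp_ofReal_mul_I_re]
  apply Real.cos_nonpos_of_pi_div_two_le_of_le
  · rw [div_le_div_iff₀ two_pos (by positivity)]
    nlinarith [Real.pi_pos]
  · rw [div_le_iff₀ (by positivity)]
    nlinarith [Real.pi_pos]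

lemma hasSphericalRep_three_zmodCycle_of_odd (hk : Odd k) (hk₁ : k ≠ 1) {q : ℝ}
    (hq : 1 / 2 ≤ q) : HasSphericalRep (zmodCycle k) 3 q := by
  obtain ⟨j, rfl⟩ := hk
  let a : ZMod (2 * j + 1) := j
  -- Successive vertices are nearly antipodal, so that unit steps force a small radius.
  let w : Circle := ZMod.toCircle a
  have hw : 2 ≤ ‖(w : ℂ) - 1‖ ^ 2 := by
    linarith [norm_circle_sub_one_sq w, re_toCircle_nonpos (j := j) (by lia)]
  have hw₁ : w ≠ 1 := fun h ↦ by norm_num [h] at hw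
  have ha : 2 * a + 1 = 0 := by
    rw [← ZMod.natCast_self (2 * j + 1)]
    push_cast
    rfl
  have hg : Function.Injective fun x ↦ ZMod.toCircle (a * x) :=
    ZMod.injective_toCircle.comp fun x y (hxy : a * x = a * y) ↦ by
      linear_combination (-2) * hxy + (x - y) * ha
  have hstep (x) : ZMod.toCircle (a * (x + 1)) = w * ZMod.toCircle (a * x) := by
    rw [mul_add_one, AddChar.map_add_eq_mul, mul_comm]
  refine hasSphericalRep_succ_of_le (q := (‖(w : ℂ) - 1‖ ^ 2)⁻¹) ?_ <|
    hasSphericalRep_two_of_rotation hw₁ hg fun x y hxy ↦ ?_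
  · exact (inv_anti₀ two_pos hw).trans (by rwa [← one_div])
  · obtain ⟨-, rfl | rfl⟩ := zmodCycle_adj.1 hxy
    exacts [.inl (hstep x), .inr (hstep y)]

lemma exists_circle_not_isOfFinOrder {t : ℚ} (ht₀ : 0 < t) (ht : t < 1 / 2) :
    ∃ w : Circle, ¬ IsOfFinOrder w ∧ (w : ℂ).re = t := by
  have ht₀' : (0 : ℝ) < t := by exact_mod_cast ht₀
  have ht' : (t : ℝ) < 1 / 2 := by
    rw [← Rat.cast_lt (K := ℝ)] at ht
    simpa using ht
  let θ := Real.arccos t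
  have hcos : Real.cos θ = t := Real.cos_arccos (by linarith) (by linarith)
  refine ⟨Circle.exp θ, fun hfin ↦ ?_, by rw [Circle.coe_exp, Complex.exp_ofReal_mul_I_re, hcos]⟩
  obtain ⟨N, hN, hpow⟩ := isOfFinOrder_iff_pow_eq_one.1 hfin
  have hθ : ∃ r : ℚ, θ = r * Real.pi := by
    rw [← Circle.exp_nsmul, Circle.exp_eq_one] at hpow
    obtain ⟨m, hm⟩ := hpow
    refine ⟨2 * m / N, ?_⟩
    have : (N : ℝ) ≠ 0 := by positivity
    push_cast
    field_simp
    linear_combination hm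
  have := niven hθ ⟨t, hcos⟩
  simp only [hcos, Set.mem_insert_iff, Set.mem_singleton_iff] at this
  rcases this with h | h | h | h | h <;> linarith

end Rotations

section CompleteJoinCycle

variable {n k : ℕ}

lemma exists_circle_not_isOfFinOrder_norm_sub_one_sq_inv_eq (hn : n ≠ 0) :
    ∃ w : Circle, ¬ IsOfFinOrder w ∧ (‖(w : ℂ) - 1‖ ^ 2)⁻¹ = (n + 2) / (2 * (n + 1)) := by
  have hn' : (1 : ℚ) ≤ n := Nat.one_le_cast.2 (Nat.one_le_iff_ne_zero.2 hn)
  obtain ⟨w, hw, hre⟩ := exists_circle_not_isOfFinOrder (t := 1 / (n + 2)) (by positivity)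
    (one_div_lt_one_div_of_lt two_pos (by linarith))
  refine ⟨w, hw, ?_⟩
  rw [norm_circle_sub_one_sq, hre, inv_eq_iff_eq_inv, inv_div]
  push_cast
  field_simp
  ring

lemma udim_graphJoin_top_zmodCycle (hn : n ≠ 0) (hk : Odd k) (hk₃ : 3 ≤ k) :
    (graphJoin (⊤ : SimpleGraph (Fin (n + 1))) (zmodCycle k)).udim = n + 3 := by
  obtain ⟨w, hw, hradius⟩ := exists_circle_not_isOfFinOrder_norm_sub_one_sq_inv_eq hn
  refine udim_eq_succ_iff.2 ⟨?_, fun h ↦ ?_⟩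
  · refine (hasUnitDistRep_graphJoin_top_iff (m := 3)).2
      (hasSphericalRep_three_zmodCycle_of_odd hk (by lia) ?_)
    rw [div_le_div_iff₀ two_pos (by positivity)]
    linarith
  · rw [hasUnitDistRep_graphJoin_top_iff (m := 2), ← hradius] at h
    exact hw <| isOfFinOrder_iff_pow_eq_one.2
      ⟨k, by lia, pow_eq_one_of_hasSphericalRep_zmodCycle hk₃ h⟩

lemma hasUnitDistRep_deleteEdges_rim [NeZero k] (hn : n ≠ 0) (x : ZMod k) :
    ((graphJoin (⊤ : SimpleGraph (Fin (n + 1))) (zmodCycle k)).deleteEdges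
      {s(.inr x, .inr (x + 1))}).HasUnitDistRep (n + 2) := by
  obtain ⟨w, hw, hradius⟩ := exists_circle_not_isOfFinOrder_norm_sub_one_sq_inv_eq hn
  rw [graphJoin_deleteEdges_inr, hasUnitDistRep_graphJoin_top_iff, ← hradius]
  exact hasSphericalRep_zmodCycle_deleteEdges hw x

lemma sym2_add_one_injective (hk : 3 ≤ k) :
    Function.Injective fun x : ZMod k ↦ s(x, x + 1) := by
  intro x y hxy
  rcases Sym2.eq_iff.1 hxy with ⟨h, -⟩ | ⟨h₁, h₂⟩
  · exact h
  · exact absurd (by linear_combination h₂ - h₁) (zmod_two_ne_zero hk)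

lemma le_ncard_hasUnitDistRep_deleteEdges (hn : n ≠ 0) (hk : 3 ≤ k) :
    k ≤ {e | ((graphJoin (⊤ : SimpleGraph (Fin (n + 1))) (zmodCycle k)).deleteEdges
      {e}).HasUnitDistRep (n + 2)}.ncard := by
  have : NeZero k := ⟨by lia⟩
  let rimEdge (x : ZMod k) : Sym2 (Fin (n + 1) ⊕ ZMod k) := s(.inr x, .inr (x + 1))
  have hinj : rimEdge.Injective :=
    (Sym2.map.injective Sum.inr_injective).comp (sym2_add_one_injective hk)
  calc k = (Set.range rimEdge).ncard := by
        rw [← Set.image_univ, Set.ncard_image_of_injective _ hinj, Set.ncard_univ, Nat.card_zmod]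
    _ ≤ _ := Set.ncard_le_ncard (Set.range_subset_iff.2 (hasUnitDistRep_deleteEdges_rim hn))

end CompleteJoinCycle

theorem exists_large_dimCritical (n : ℕ) (hn : 2 ≤ n) (c : ℕ) (hc : 1 ≤ c) :
    ∃ (V : Type) (_ : Fintype V) (H : SimpleGraph V),
      H.Connected ∧ H.IsDimCritical ∧ H.udim = n + 2 ∧ c < Nat.card H.edgeSet := by
  obtain ⟨m, rfl⟩ := Nat.exists_eq_add_of_le' hn
  let k := 2 * c + 1
  have : NeZero k := ⟨by lia⟩
  have hG := udim_graphJoin_top_zmodCycle (n := m + 1) (by lia) (odd_two_mul_add_one c)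
    (show 3 ≤ k by lia)
  obtain ⟨s, H, hHG, hconn, hcrit, hdim⟩ := exists_dimCritical_isContained (by lia) hG
  refine ⟨s, Fintype.ofFinite s, H, hconn, hcrit, hdim, ?_⟩
  calc c < k := by lia
    _ ≤ _ := le_ncard_hasUnitDistRep_deleteEdges (n := m + 1) (by lia) (by lia)
    _ ≤ Nat.card H.edgeSet :=
      ncard_le_card_edgeSet_of_isContained hHG (udim_eq_succ_iff.1 hdim).2
end
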